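/- There is an absolute constant C such that for every entire function f of exponential type at most π that is real-valued on ℝ and whose restriction to ℝ is Lebesgue integrable, there exists an entire function g of exponential type at most π with g integrable on ℝ, |f(t)| ≤ g(t) for all t ∈ ℝ, and ‖g‖_{L¹(ℝ)} ≤ C‖f‖_{L¹(ℝ)}. (One may take g(t) = ∑_{n∈ℤ} c_n sin²((π/2)(t−n))/(t−n)² with c_n = max_{[n,n+1]} |f|.) -/

import Mathlib

/-!
Write `K_a(x) = (π sin (a x / 2) / (a x))²` for the Fejér kernel of type `a`, normalised so that
`K_a ≥ 1` on `[-π/a, π/a]`. If `w ≥ 0` is integrable, then `w * K_a` extends to an entire function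
of type `a`, and at `x` it dominates the integral of `w` over the window `[x, x + π/a]`. That window
integral dominates `|f(x)|` when `w = (a/π) |f| + |f'|`, by averaging the fundamental theorem of
calculus. So the convolution with this `w` is the majorant, and its `L¹` norm is controlled by
Bernstein's inequality `‖f'‖₁ ≤ e a ‖f‖₁`, which follows by duality from the sup-norm inequality,
itself a consequence of Phragmén–Lindelöf and Cauchy's estimate. All bounds scale so that the
final constant does not depend on `a`.
-/

open MeasureTheory Complex

noncomputable section

/-- `f` is an entire function of exponential type at most `a`:
for every `ε > 0` there is `B` with `‖f(z)‖ ≤ B e^{(a+ε)‖z‖}` for all `z`. -/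
def ExpTypeLE (a : ℝ) (f : ℂ → ℂ) : Prop :=
  ∀ ε : ℝ, 0 < ε → ∃ B : ℝ, ∀ z : ℂ, ‖f z‖ ≤ B * Real.exp ((a + ε) * ‖z‖)

open Filter Set Topology
open scoped Real Convolution

section Family

variable {α : Type*} [MeasurableSpace α] {μ : Measure α} {a : ℝ} {K : ℂ → α → ℂ}

/-- The functions `z ↦ K z s` are of exponential type at most `a`, with constants that can be
chosen integrable in `s`. This is what makes `z ↦ ∫ s, K z s ∂μ` an entire function of
exponential type at most `a`. -/
def DominatedExpTypeLE (μ : Measure α) (a : ℝ) (K : ℂ → α → ℂ) : Prop :=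
  ∀ ε : ℝ, 0 < ε → ∃ B : α → ℝ, Integrable B μ ∧
    ∀ᵐ s ∂μ, ∀ z : ℂ, ‖K z s‖ ≤ B s * Real.exp ((a + ε) * ‖z‖)

theorem DominatedExpTypeLE.expTypeLE_integral (hK : DominatedExpTypeLE μ a K) :
    ExpTypeLE a fun z => ∫ s, K z s ∂μ := by
  intro ε hε
  obtain ⟨B, hB, hKB⟩ := hK ε hε
  refine ⟨∫ s, B s ∂μ, fun z => ?_⟩
  rw [← integral_mul_const]
  exact norm_integral_le_of_norm_le (hB.mul_const _) (hKB.mono fun s hs => hs z)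

theorem DominatedExpTypeLE.exists_bound_closedBall (hK : DominatedExpTypeLE μ a K) (R : ℝ) :
    ∃ B : α → ℝ, Integrable B μ ∧ ∀ᵐ s ∂μ, ∀ z : ℂ, ‖z‖ ≤ R → ‖K z s‖ ≤ B s := by
  obtain ⟨B, hB, hKB⟩ := hK (|a| + 1) (by positivity)
  refine ⟨_, hB.mul_const (Real.exp ((a + (|a| + 1)) * R)),
    hKB.mono fun s hs z hz => (hs z).trans ?_⟩
  have hBs : 0 ≤ B s := by simpa using (norm_nonneg _).trans (hs 0)
  have hrate : 0 ≤ a + (|a| + 1) := by linarith [neg_abs_le a]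
  gcongr

theorem DominatedExpTypeLE.hasDerivAt_integral (hK : DominatedExpTypeLE μ a K)
    (hmeas : ∀ z, AEStronglyMeasurable (K z) μ) (hdiff : ∀ᵐ s ∂μ, Differentiable ℂ (K · s))
    (z : ℂ) :
    HasDerivAt (fun z => ∫ s, K z s ∂μ) (∫ s, deriv (K · s) z ∂μ) z := by
  obtain ⟨B, hB, hKB⟩ := hK.exists_bound_closedBall (‖z‖ + 2)
  have hint : Integrable (K z) μ :=
    hB.mono' (hmeas z) (hKB.mono fun s hs => hs z (by linarith))
  have hderiv_meas : AEStronglyMeasurable (fun s => deriv (K · s) z) μ :=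
    aestronglyMeasurable_of_tendsto_ae (𝓝[≠] z)
      (fun t => ((hmeas t).sub (hmeas z)).const_smul (t - z)⁻¹)
      (hdiff.mono fun s hs => (hs z).hasDerivAt.tendsto_slope)
  have hcauchy : ∀ᵐ s ∂μ, ∀ x ∈ Metric.ball z 1, ‖deriv (K · s) x‖ ≤ B s := by
    filter_upwards [hdiff, hKB] with s hs hsB x hx
    have hsphere : ∀ y ∈ Metric.sphere x 1, ‖K y s‖ ≤ B s := fun y hy => hsB y <| by
      rw [mem_ball_iff_norm] at hx
      rw [mem_sphere_iff_norm] at hy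
      linarith [norm_le_norm_add_norm_sub' y x, norm_le_norm_add_norm_sub' x z]
    simpa using norm_deriv_le_of_forall_mem_sphere_norm_le one_pos hs.diffContOnCl hsphere
  exact (hasDerivAt_integral_of_dominated_loc_of_deriv_le (Metric.ball_mem_nhds z one_pos)
    (.of_forall hmeas) hint hderiv_meas hcauchy hB
    (hdiff.mono fun s hs x _ => (hs x).hasDerivAt)).2

end Family

section PhragmenLindelof

variable {a A : ℝ} {f : ℂ → ℂ}

theorem ExpTypeLE.comp_mul_left (hf : ExpTypeLE a f) {c : ℂ} (hc : ‖c‖ = 1) :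
    ExpTypeLE a fun z => f (c * z) := by
  intro ε hε
  obtain ⟨B, hB⟩ := hf ε hε
  exact ⟨B, fun z => by simpa [hc] using hB (c * z)⟩

theorem norm_mul_exp_neg_ofReal_mul (f : ℂ → ℂ) (b : ℝ) (z : ℂ) :
    ‖f z * exp (-b * z)‖ = ‖f z‖ * Real.exp (-b * z.re) := by
  rw [norm_mul, norm_exp, ← ofReal_neg, re_ofReal_mul]

theorem ExpTypeLE.norm_le_mul_exp_re_of_lt (hf : ExpTypeLE a f) (hd : Differentiable ℂ f)
    (hA : ∀ y : ℝ, ‖f (y * I)‖ ≤ A) {b : ℝ} (hab : a < b) {z : ℂ} (hz : 0 ≤ z.re) :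
    ‖f z‖ ≤ A * Real.exp (b * z.re) := by
  obtain ⟨B, hB⟩ := hf (b - a) (sub_pos.2 hab)
  rw [add_sub_cancel] at hB
  have hB0 : 0 ≤ B := by simpa using (norm_nonneg _).trans (hB 0)
  suffices hdamped : ‖f z * exp (-b * z)‖ ≤ A by
    rw [norm_mul_exp_neg_ofReal_mul, neg_mul, Real.exp_neg, ← div_eq_mul_inv] at hdamped
    exact (div_le_iff₀ (Real.exp_pos _)).1 hdamped
  refine PhragmenLindelof.right_half_plane_of_bounded_on_real (f := fun z => f z * exp (-b * z))
    (by fun_prop : Differentiable ℂ _).diffContOnCl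
    ⟨1, one_lt_two, 2 * |b|, .of_bound B (.of_forall fun w => ?growth)⟩
    ⟨B, eventually_map.2 ?real⟩ (fun y => ?imaginary) hz
  case growth =>
    have hre : -b * w.re ≤ |b| * ‖w‖ := calc
      -b * w.re ≤ |-b * w.re| := le_abs_self _
      _ = |b| * |w.re| := by rw [abs_mul, abs_neg]
      _ ≤ |b| * ‖w‖ := by gcongr; exact abs_re_le_norm w
    have hnorm : b * ‖w‖ ≤ |b| * ‖w‖ := mul_le_mul_of_nonneg_right (le_abs_self b) (norm_nonneg w)
    rw [norm_mul_exp_neg_ofReal_mul, Real.rpow_one, Real.norm_of_nonneg (Real.exp_pos _).le]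
    calc ‖f w‖ * Real.exp (-b * w.re)
        ≤ B * Real.exp (b * ‖w‖) * Real.exp (-b * w.re) := by gcongr; exact hB w
      _ = B * Real.exp (b * ‖w‖ + -b * w.re) := by rw [mul_assoc, ← Real.exp_add]
      _ ≤ B * Real.exp (2 * |b| * ‖w‖) := by gcongr; linarith
  case real =>
    filter_upwards [eventually_ge_atTop 0] with x hx
    have hfx : ‖f x‖ ≤ B * Real.exp (b * x) := by simpa [abs_of_nonneg hx] using hB x
    rw [norm_mul_exp_neg_ofReal_mul, ofReal_re, neg_mul, Real.exp_neg, ← div_eq_mul_inv]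
    exact (div_le_iff₀ (Real.exp_pos _)).2 hfx
  case imaginary =>
    rw [norm_mul_exp_neg_ofReal_mul]
    simpa using hA y

theorem ExpTypeLE.norm_le_mul_exp_re (hf : ExpTypeLE a f) (hd : Differentiable ℂ f)
    (hA : ∀ y : ℝ, ‖f (y * I)‖ ≤ A) {z : ℂ} (hz : 0 ≤ z.re) :
    ‖f z‖ ≤ A * Real.exp (a * z.re) := by
  have hcont : Continuous fun b : ℝ => A * Real.exp (b * z.re) := by fun_prop
  refine ge_of_tendsto (hcont.continuousWithinAt (s := Ioi a)) ?_
  filter_upwards [self_mem_nhdsWithin] with b hab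
  exact hf.norm_le_mul_exp_re_of_lt hd hA hab hz

theorem ExpTypeLE.norm_le_mul_exp_abs_im (hf : ExpTypeLE a f) (hd : Differentiable ℂ f)
    (hA : ∀ x : ℝ, ‖f x‖ ≤ A) (z : ℂ) : ‖f z‖ ≤ A * Real.exp (a * |z.im|) := by
  rcases le_total 0 z.im with hz | hz
  · have hbound : ∀ y : ℝ, ‖f (I * (y * I))‖ ≤ A := fun y => by
      simpa [mul_left_comm I (y : ℂ)] using hA (-y)
    simpa [← mul_assoc, abs_of_nonneg hz] using
      (hf.comp_mul_left norm_I).norm_le_mul_exp_re (z := -I * z) (by fun_prop) hbound (by simpa)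
  · have hbound : ∀ y : ℝ, ‖f (-I * (y * I))‖ ≤ A := fun y => by
      simpa [mul_left_comm I (y : ℂ)] using hA y
    simpa [← mul_assoc, abs_of_nonpos hz] using
      (hf.comp_mul_left (c := -I) (by simp)).norm_le_mul_exp_re (z := I * z) (by fun_prop)
        hbound (by simpa)

end PhragmenLindelof

section Bernstein

variable {a A : ℝ} {f : ℂ → ℂ}

theorem ExpTypeLE.norm_deriv_ofReal_le (hf : ExpTypeLE a f) (ha : 0 < a)
    (hd : Differentiable ℂ f) (hA : ∀ x : ℝ, ‖f x‖ ≤ A) (x : ℝ) :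
    ‖deriv f x‖ ≤ Real.exp 1 * a * A := by
  have hA0 : 0 ≤ A := (norm_nonneg _).trans (hA 0)
  have hsphere : ∀ z ∈ Metric.sphere (x : ℂ) a⁻¹, ‖f z‖ ≤ A * Real.exp 1 := by
    intro z hz
    have him : a * |z.im| ≤ 1 := by
      have habs : |z.im| ≤ a⁻¹ := by
        simpa [mem_sphere_iff_norm.1 hz] using abs_im_le_norm (z - x)
      simpa [ha.ne'] using mul_le_mul_of_nonneg_left habs ha.le
    refine (hf.norm_le_mul_exp_abs_im hd hA z).trans ?_
    gcongr
  calc ‖deriv f x‖ ≤ A * Real.exp 1 / a⁻¹ :=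
        norm_deriv_le_of_forall_mem_sphere_norm_le (inv_pos.2 ha) hd.diffContOnCl hsphere
    _ = Real.exp 1 * a * A := by rw [div_inv_eq_mul]; ring

theorem ExpTypeLE.dominated_mul_translate (hf : ExpTypeLE a f) (ha : 0 ≤ a) {φ : ℝ → ℂ}
    (hφ : ∀ s, ‖φ s‖ ≤ 1) (N : ℝ) :
    DominatedExpTypeLE (volume.restrict (Ioc (-N) N)) a fun z s => φ s * f (z + s) := by
  intro ε hε
  obtain ⟨B, hB⟩ := hf ε hε
  have hB0 : 0 ≤ B := by simpa using (norm_nonneg _).trans (hB 0)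
  refine ⟨fun _ => B * Real.exp ((a + ε) * N), integrable_const _,
    ae_restrict_of_forall_mem measurableSet_Ioc fun s hs z => ?_⟩
  have hsN : ‖(s : ℂ)‖ ≤ N := by
    rw [norm_real, Real.norm_eq_abs]
    exact abs_le.2 ⟨hs.1.le, hs.2⟩
  have hzs : ‖z + s‖ ≤ N + ‖z‖ := (norm_add_le _ _).trans (by linarith)
  calc ‖φ s * f (z + s)‖ ≤ ‖f (z + s)‖ := by
        rw [norm_mul]
        exact mul_le_of_le_one_left (norm_nonneg _) (hφ s)
    _ ≤ B * Real.exp ((a + ε) * ‖z + s‖) := hB _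
    _ ≤ B * Real.exp ((a + ε) * (N + ‖z‖)) := by gcongr
    _ = B * Real.exp ((a + ε) * N) * Real.exp ((a + ε) * ‖z‖) := by
        rw [mul_add, Real.exp_add, mul_assoc]

theorem norm_setIntegral_mul_translate_le {g φ : ℝ → ℂ} (hg : Integrable g)
    (hφ : ∀ s, ‖φ s‖ ≤ 1) (S : Set ℝ) (x : ℝ) :
    ‖∫ s in S, φ s * g (x + s)‖ ≤ ∫ s, ‖g s‖ := by
  have htranslate : Integrable fun s => ‖g (x + s)‖ := (hg.comp_add_left x).norm
  calc ‖∫ s in S, φ s * g (x + s)‖ ≤ ∫ s in S, ‖g (x + s)‖ := by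
        refine norm_integral_le_of_norm_le htranslate.integrableOn (.of_forall fun s => ?_)
        rw [norm_mul]
        exact mul_le_of_le_one_left (norm_nonneg _) (hφ s)
    _ ≤ ∫ s, ‖g (x + s)‖ :=
        setIntegral_le_integral htranslate (.of_forall fun _ => norm_nonneg _)
    _ = ∫ s, ‖g s‖ := integral_add_left_eq_self (fun s => ‖g s‖) x

theorem continuous_deriv_comp_ofReal (hd : Differentiable ℂ f) :
    Continuous fun s : ℝ => deriv f s :=
  (hd.contDiff.continuous_deriv_one).comp continuous_ofReal

-- Duality: pairing the translates of `f` with the unimodular phase conjugate to `f'` gives an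
-- entire function, bounded on `ℝ` by `‖f‖₁`, whose derivative at `0` is the integral of `|f'|`.
theorem ExpTypeLE.setIntegral_norm_deriv_le (hf : ExpTypeLE a f) (ha : 0 < a)
    (hd : Differentiable ℂ f) (hi : Integrable fun x : ℝ => f x) (N : ℝ) :
    ∫ s in Ioc (-N) N, ‖deriv f (s : ℝ)‖ ≤ Real.exp 1 * a * ∫ x : ℝ, ‖f x‖ := by
  set φ : ℝ → ℂ := fun s => exp (-(arg (deriv f s) : ℂ) * I) with hφ
  have hφ_meas : Measurable φ := by
    have := (continuous_deriv_comp_ofReal hd).measurable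
    fun_prop
  have hφ_norm (s : ℝ) : ‖φ s‖ ≤ 1 := by
    simp only [hφ, ← ofReal_neg, norm_exp_ofReal_mul_I, le_refl]
  have hφ_deriv (s : ℝ) : φ s * deriv f s = (‖deriv f s‖ : ℝ) := by
    rw [hφ, ← norm_mul_exp_arg_mul_I (deriv f s), mul_left_comm, ← exp_add]
    simp
  set F : ℂ → ℂ := fun z => ∫ s in Ioc (-N) N, φ s * f (z + (s : ℝ)) with hF
  have hdom := hf.dominated_mul_translate ha.le hφ_norm N
  have hderiv := hdom.hasDerivAt_integral
    (fun z => (hφ_meas.mul (by have := hd.continuous; fun_prop)).aestronglyMeasurable)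
    (.of_forall fun s => by fun_prop)
  have hbound (x : ℝ) : ‖F x‖ ≤ ∫ s : ℝ, ‖f s‖ := by
    simpa [hF] using norm_setIntegral_mul_translate_le hi hφ_norm (Ioc (-N) N) x
  have hderiv_zero : deriv F (0 : ℝ) = (∫ s in Ioc (-N) N, ‖deriv f (s : ℝ)‖ : ℝ) := by
    rw [(hderiv _).deriv, ← integral_complex_ofReal]
    refine integral_congr_ae (.of_forall fun s => ?_)
    simpa [deriv_comp_add_const] using hφ_deriv s
  have hbernstein := hdom.expTypeLE_integral.norm_deriv_ofReal_le ha
    (fun z => (hderiv z).differentiableAt) hbound 0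
  rw [hderiv_zero, norm_real] at hbernstein
  exact (le_abs_self _).trans hbernstein

theorem ExpTypeLE.eventually_intervalIntegral_norm_deriv_le (hf : ExpTypeLE a f) (ha : 0 < a)
    (hd : Differentiable ℂ f) (hi : Integrable fun x : ℝ => f x) :
    ∀ᶠ N : ℝ in atTop,
      ∫ s in (-N)..N, ‖deriv f (s : ℝ)‖ ≤ Real.exp 1 * a * ∫ x : ℝ, ‖f x‖ := by
  filter_upwards [eventually_ge_atTop 0] with N hN
  rw [intervalIntegral.integral_of_le (by linarith)]
  exact hf.setIntegral_norm_deriv_le ha hd hi N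

theorem ExpTypeLE.integrable_deriv (hf : ExpTypeLE a f) (ha : 0 < a)
    (hd : Differentiable ℂ f) (hi : Integrable fun x : ℝ => f x) :
    Integrable fun x : ℝ => deriv f x :=
  integrable_of_intervalIntegral_norm_bounded _
    (fun _ => (continuous_deriv_comp_ofReal hd).integrableOn_Ioc) tendsto_neg_atTop_atBot
    tendsto_id (hf.eventually_intervalIntegral_norm_deriv_le ha hd hi)

theorem ExpTypeLE.integral_norm_deriv_le (hf : ExpTypeLE a f) (ha : 0 < a)
    (hd : Differentiable ℂ f) (hi : Integrable fun x : ℝ => f x) :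
    ∫ x : ℝ, ‖deriv f x‖ ≤ Real.exp 1 * a * ∫ x : ℝ, ‖f x‖ :=
  le_of_tendsto (intervalIntegral_tendsto_integral (hf.integrable_deriv ha hd hi).norm
    tendsto_neg_atTop_atBot tendsto_id) (hf.eventually_intervalIntegral_norm_deriv_le ha hd hi)

end Bernstein

section Window

variable {E : Type*} [NormedAddCommGroup E] [NormedSpace ℝ E] [CompleteSpace E] {u u' : ℝ → E}

theorem norm_le_norm_add_intervalIntegral_norm_deriv (hu : ∀ s, HasDerivAt u (u' s) s)
    (hu' : Continuous u') {t s T : ℝ} (hs : s ∈ Icc t T) :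
    ‖u t‖ ≤ ‖u s‖ + ∫ r in t..T, ‖u' r‖ := by
  have hincrement : ‖u s - u t‖ ≤ ∫ r in t..T, ‖u' r‖ := by
    rw [← intervalIntegral.integral_eq_sub_of_hasDerivAt (fun r _ => hu r)
      (hu'.intervalIntegrable _ _)]
    exact (intervalIntegral.norm_integral_le_integral_norm hs.1).trans
      (intervalIntegral.integral_mono_interval le_rfl hs.1 hs.2
        (.of_forall fun _ => norm_nonneg _) (hu'.norm.intervalIntegrable _ _))
  linarith [norm_le_norm_add_norm_sub (u s) (u t)]

theorem norm_le_intervalIntegral_norm_add_norm_deriv (hu : ∀ s, HasDerivAt u (u' s) s)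
    (hu' : Continuous u') (t : ℝ) {h : ℝ} (hh : 0 < h) :
    ‖u t‖ ≤ ∫ s in t..(t + h), (h⁻¹ * ‖u s‖ + ‖u' s‖) := by
  have hcont : Continuous fun s => ‖u s‖ :=
    (continuous_iff_continuousAt.2 fun s => (hu s).continuousAt).norm
  have haverage := intervalIntegral.integral_mono_on (μ := volume) (by linarith : t ≤ t + h)
    (by simp) ((hcont.add_const _).intervalIntegrable _ _)
    (fun s hs => norm_le_norm_add_intervalIntegral_norm_deriv hu hu' hs)
  rw [intervalIntegral.integral_add (hcont.intervalIntegrable _ _) (by simp)] at haverage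
  rw [intervalIntegral.integral_add ((hcont.const_mul _).intervalIntegrable _ _)
    (hu'.norm.intervalIntegrable _ _), intervalIntegral.integral_const_mul]
  simp only [intervalIntegral.integral_const, add_sub_cancel_left, smul_eq_mul] at haverage
  rw [← mul_le_mul_iff_right₀ hh]
  field_simp
  linarith

end Window

section Sinc

/-- The entire extension of `Real.sinc`. The difference quotient of `sin` at `0` is taken with
`dslope`, which assigns it the derivative `1` at the removable singularity. -/
def csinc : ℂ → ℂ := dslope sin 0

theorem differentiable_csinc : Differentiable ℂ csinc := by
  rw [← differentiableOn_univ, csinc, differentiableOn_dslope univ_mem]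
  exact differentiable_sin.differentiableOn

theorem csinc_ofReal (x : ℝ) : csinc x = (Real.sinc x : ℝ) := by
  rcases eq_or_ne x 0 with rfl | hx
  · simp [csinc]
  · rw [csinc, dslope_of_ne _ (ofReal_ne_zero.2 hx), Real.sinc_of_ne_zero hx, slope_def_field]
    simp

theorem norm_cos_le_exp_abs_im (z : ℂ) : ‖cos z‖ ≤ Real.exp |z.im| := by
  have hpos : ‖exp (z * I)‖ ≤ Real.exp |z.im| := by
    simpa [norm_exp] using neg_le_abs z.im
  have hneg : ‖exp (-z * I)‖ ≤ Real.exp |z.im| := by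
    simpa [norm_exp] using le_abs_self z.im
  rw [cos, norm_div, norm_ofNat, div_le_iff₀ two_pos]
  linarith [norm_add_le (exp (z * I)) (exp (-z * I))]

-- Mean value inequality: `|sin' w| ≤ exp |Im w| ≤ exp |Im z|` on a convex strip joining `0` to `z`.
theorem norm_csinc_le_exp_abs_im (z : ℂ) : ‖csinc z‖ ≤ Real.exp |z.im| := by
  rcases eq_or_ne z 0 with rfl | hz
  · simp [csinc]
  have hconvex : Convex ℝ {w : ℂ | |w.im| ≤ |z.im|} := by
    simp only [abs_le]
    exact (convex_halfSpace_im_ge _).inter (convex_halfSpace_im_le _)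
  have hsin : ‖sin z - sin 0‖ ≤ Real.exp |z.im| * ‖z - 0‖ :=
    hconvex.norm_image_sub_le_of_norm_hasDerivWithin_le
      (fun w _ => (hasDerivAt_sin w).hasDerivWithinAt)
      (fun w hw => (norm_cos_le_exp_abs_im w).trans (Real.exp_le_exp.2 hw))
      (show |(0 : ℂ).im| ≤ |z.im| by simp) (le_refl |z.im|)
  rw [csinc, dslope_of_ne _ hz, slope_def_field, norm_div]
  exact div_le_of_le_mul₀ (norm_nonneg _) (Real.exp_pos _).le hsin

theorem sq_sinc_le_two_mul_inv_one_add_sq (x : ℝ) : Real.sinc x ^ 2 ≤ 2 * (1 + x ^ 2)⁻¹ := by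
  have hone : Real.sinc x ^ 2 ≤ 1 := (sq_le_one_iff_abs_le_one _).2 (Real.abs_sinc_le_one x)
  have hdecay : Real.sinc x ^ 2 * x ^ 2 ≤ 1 := by
    rcases eq_or_ne x 0 with rfl | hx
    · simp
    · rw [← mul_pow, Real.sinc_of_ne_zero hx, div_mul_cancel₀ _ hx]
      exact Real.sin_sq_le_one x
  rw [← div_eq_mul_inv, le_div_iff₀ (by positivity)]
  linarith

theorem integrable_sq_sinc : Integrable fun x => Real.sinc x ^ 2 :=
  (integrable_inv_one_add_sq.const_mul 2).mono' (by fun_prop) (.of_forall fun x => by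
    simpa using sq_sinc_le_two_mul_inv_one_add_sq x)

theorem integral_sq_sinc_pos : 0 < ∫ x, Real.sinc x ^ 2 :=
  integral_pos_of_integrable_nonneg_nonzero (x := 0) (by fun_prop) integrable_sq_sinc
    (fun _ => sq_nonneg _) (by simp)

theorem two_div_pi_le_sinc {x : ℝ} (hx : |x| ≤ π / 2) : 2 / π ≤ Real.sinc x := by
  wlog hx0 : 0 ≤ x generalizing x
  · simpa using this (x := -x) (by simpa using hx) (by linarith)
  rcases hx0.eq_or_lt with rfl | hpos
  · simpa using (div_le_one Real.pi_pos).2 Real.two_le_pi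
  · rw [Real.sinc_of_ne_zero hpos.ne', le_div_iff₀ hpos]
    exact Real.mul_le_sin hx0 ((le_abs_self x).trans hx)

end Sinc

section FejerKernel

variable {a : ℝ}

/-- The Fejér kernel `(π sin (a x / 2) / (a x))²` on the real line, normalised to be at least `1`
on `[-π / a, π / a]`. For `a = π` it is `sin² (π x / 2) / x²`. -/
def realFejerKernel (a x : ℝ) : ℝ := (π / 2 * Real.sinc (a / 2 * x)) ^ 2

/-- The entire extension of `realFejerKernel a`. -/
def fejerKernel (a : ℝ) (z : ℂ) : ℂ := (π / 2 * csinc (a / 2 * z)) ^ 2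

theorem fejerKernel_ofReal (a x : ℝ) : fejerKernel a x = (realFejerKernel a x : ℝ) := by
  have hsinc := csinc_ofReal (a / 2 * x)
  push_cast at hsinc
  rw [fejerKernel, hsinc, realFejerKernel]
  push_cast
  rfl

theorem differentiable_fejerKernel (a : ℝ) : Differentiable ℂ (fejerKernel a) := by
  have := differentiable_csinc
  unfold fejerKernel
  fun_prop

theorem norm_fejerKernel_le (ha : 0 ≤ a) (z : ℂ) :
    ‖fejerKernel a z‖ ≤ (π / 2) ^ 2 * Real.exp (a * |z.im|) := by
  have him : |((a / 2 : ℂ) * z).im| = a / 2 * |z.im| := by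
    rw [← ofReal_ofNat, ← ofReal_div, im_ofReal_mul, abs_mul, abs_of_nonneg (by positivity)]
  have hsinc := norm_csinc_le_exp_abs_im (a / 2 * z)
  rw [him] at hsinc
  calc ‖fejerKernel a z‖ = (π / 2) ^ 2 * ‖csinc (a / 2 * z)‖ ^ 2 := by
        simp [fejerKernel, mul_pow, abs_of_pos Real.pi_pos]
    _ ≤ (π / 2) ^ 2 * Real.exp (a / 2 * |z.im|) ^ 2 := by gcongr
    _ = (π / 2) ^ 2 * Real.exp (a * |z.im|) := by
        rw [← Real.exp_nat_mul]
        ring_nf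

theorem continuous_realFejerKernel (a : ℝ) : Continuous (realFejerKernel a) := by
  unfold realFejerKernel
  fun_prop

theorem realFejerKernel_nonneg (a x : ℝ) : 0 ≤ realFejerKernel a x := sq_nonneg _

theorem realFejerKernel_le (a x : ℝ) : realFejerKernel a x ≤ (π / 2) ^ 2 := by
  rw [realFejerKernel, mul_pow]
  exact mul_le_of_le_one_right (by positivity)
    ((sq_le_one_iff_abs_le_one _).2 (Real.abs_sinc_le_one _))

theorem one_le_realFejerKernel (ha : 0 < a) {x : ℝ} (hx : |x| ≤ π / a) :
    1 ≤ realFejerKernel a x := by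
  have hhalf : |a / 2 * x| ≤ π / 2 := by
    rw [abs_mul, abs_of_pos (by positivity)]
    calc a / 2 * |x| ≤ a / 2 * (π / a) := by gcongr
      _ = π / 2 := by field_simp
  refine one_le_pow₀ ?_
  calc (1 : ℝ) = π / 2 * (2 / π) := by field_simp
    _ ≤ π / 2 * Real.sinc (a / 2 * x) := by gcongr; exact two_div_pi_le_sinc hhalf

theorem integrable_realFejerKernel (ha : a ≠ 0) : Integrable (realFejerKernel a) := by
  have hkernel : realFejerKernel a = fun x => (π / 2) ^ 2 * Real.sinc (a / 2 * x) ^ 2 :=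
    funext fun _ => mul_pow _ _ _
  rw [hkernel]
  exact (integrable_sq_sinc.comp_mul_left' (div_ne_zero ha two_ne_zero)).const_mul ((π / 2) ^ 2)

theorem integral_realFejerKernel (ha : 0 < a) :
    ∫ x, realFejerKernel a x = π ^ 2 / (2 * a) * ∫ x, Real.sinc x ^ 2 := by
  simp only [realFejerKernel, mul_pow]
  rw [integral_const_mul, Measure.integral_comp_mul_left (fun x => Real.sinc x ^ 2),
    abs_of_pos (by positivity), smul_eq_mul]
  field_simp

end FejerKernel

section FejerConvolution

variable {a : ℝ} {w : ℝ → ℝ}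

/-- The convolution of `w` with the Fejér kernel of type `a`, as a function on `ℂ`. -/
def fejerConvolution (a : ℝ) (w : ℝ → ℝ) (z : ℂ) : ℂ := ∫ s : ℝ, w s * fejerKernel a (z - s)

theorem dominated_mul_fejerKernel (ha : 0 ≤ a) (hw : Integrable w) :
    DominatedExpTypeLE volume a fun z (s : ℝ) => w s * fejerKernel a (z - s) := by
  intro ε hε
  refine ⟨fun s => ‖w s‖ * (π / 2) ^ 2, hw.norm.mul_const _, .of_forall fun s z => ?_⟩
  have him : |(z - s).im| ≤ ‖z‖ := by simpa using abs_im_le_norm z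
  rw [norm_mul, norm_real, mul_assoc]
  gcongr
  refine (norm_fejerKernel_le ha _).trans ?_
  gcongr
  exact le_add_of_nonneg_right hε.le

theorem differentiable_fejerConvolution (ha : 0 ≤ a) (hw : Integrable w) :
    Differentiable ℂ (fejerConvolution a w) := fun z =>
  have hkernel := differentiable_fejerKernel a
  have hmeas (z : ℂ) : AEStronglyMeasurable fun s : ℝ => w s * fejerKernel a (z - s) :=
    hw.ofReal.aestronglyMeasurable.mul
      (hkernel.continuous.comp (by fun_prop)).aestronglyMeasurable
  ((dominated_mul_fejerKernel ha hw).hasDerivAt_integral hmeas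
    (.of_forall fun s => by fun_prop) z).differentiableAt

theorem expTypeLE_fejerConvolution (ha : 0 ≤ a) (hw : Integrable w) :
    ExpTypeLE a (fejerConvolution a w) :=
  (dominated_mul_fejerKernel ha hw).expTypeLE_integral

theorem fejerConvolution_ofReal (a : ℝ) (w : ℝ → ℝ) (x : ℝ) :
    fejerConvolution a w x =
      ((w ⋆[ContinuousLinearMap.mul ℝ ℝ] realFejerKernel a) x : ℝ) := by
  rw [fejerConvolution, convolution_def, ← integral_complex_ofReal]
  refine integral_congr_ae (.of_forall fun s => ?_)
  simp [← ofReal_sub, fejerKernel_ofReal]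

theorem integrable_fejerConvolution (ha : a ≠ 0) (hw : Integrable w) :
    Integrable fun x : ℝ => fejerConvolution a w x := by
  simp only [fejerConvolution_ofReal]
  exact (hw.integrable_convolution _ (integrable_realFejerKernel ha)).ofReal

theorem integral_norm_fejerConvolution (ha : 0 < a) (hw : Integrable w) (hw0 : 0 ≤ w) :
    ∫ x : ℝ, ‖fejerConvolution a w x‖ = (∫ s, w s) * (π ^ 2 / (2 * a) * ∫ x, Real.sinc x ^ 2) := by
  have hnonneg (x : ℝ) : 0 ≤ (w ⋆[ContinuousLinearMap.mul ℝ ℝ] realFejerKernel a) x :=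
    integral_nonneg fun s => mul_nonneg (hw0 s) (realFejerKernel_nonneg a _)
  simp only [fejerConvolution_ofReal, norm_real, Real.norm_of_nonneg (hnonneg _)]
  rw [integral_convolution _ hw (integrable_realFejerKernel ha.ne'), integral_realFejerKernel ha]
  rfl

theorem setIntegral_le_re_fejerConvolution (ha : 0 < a) (hw : Integrable w) (hw0 : 0 ≤ w)
    (x : ℝ) :
    ∫ s in Ioc x (x + π / a), w s ≤ (fejerConvolution a w x).re := by
  have hint : Integrable fun s => w s * realFejerKernel a (x - s) :=
    hw.mul_bdd ((continuous_realFejerKernel a).comp (by fun_prop)).aestronglyMeasurable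
      (.of_forall fun s => by
        rw [Real.norm_of_nonneg (realFejerKernel_nonneg a _)]
        exact realFejerKernel_le a _)
  have hnonneg (s : ℝ) : 0 ≤ w s * realFejerKernel a (x - s) :=
    mul_nonneg (hw0 s) (realFejerKernel_nonneg a _)
  have hwindow : ∀ s ∈ Ioc x (x + π / a), w s ≤ w s * realFejerKernel a (x - s) := fun s hs =>
    le_mul_of_one_le_right (hw0 s) <| one_le_realFejerKernel ha <|
      abs_le.2 ⟨by linarith [hs.2], by linarith [hs.1, div_pos Real.pi_pos ha]⟩
  calc ∫ s in Ioc x (x + π / a), w s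
      ≤ ∫ s in Ioc x (x + π / a), w s * realFejerKernel a (x - s) :=
        setIntegral_mono_on hw.integrableOn hint.integrableOn measurableSet_Ioc hwindow
    _ ≤ ∫ s, w s * realFejerKernel a (x - s) :=
        setIntegral_le_integral hint (.of_forall hnonneg)
    _ = (fejerConvolution a w x).re := by rw [fejerConvolution_ofReal, ofReal_re]; rfl

end FejerConvolution

section Majorant

variable {a : ℝ} {f : ℂ → ℂ}

/-- The density `(a / π) |f| + |f'|` on the real line, whose integral over `[x, x + π / a]`
dominates `|f x|`. -/
def windowDensity (a : ℝ) (f : ℂ → ℂ) (s : ℝ) : ℝ := a / π * ‖f s‖ + ‖deriv f s‖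

theorem windowDensity_nonneg (ha : 0 ≤ a) (f : ℂ → ℂ) : 0 ≤ windowDensity a f := fun _ => by
  have := Real.pi_pos
  exact add_nonneg (by positivity) (norm_nonneg _)

theorem norm_le_setIntegral_windowDensity (ha : 0 < a) (hd : Differentiable ℂ f) (x : ℝ) :
    ‖f x‖ ≤ ∫ s in Ioc x (x + π / a), windowDensity a f s := by
  have hh : 0 < π / a := div_pos Real.pi_pos ha
  simpa only [windowDensity, inv_div,
    intervalIntegral.integral_of_le (le_add_of_nonneg_right hh.le)] using
    norm_le_intervalIntegral_norm_add_norm_deriv (fun s => (hd s).hasDerivAt.comp_ofReal)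
      (continuous_deriv_comp_ofReal hd) x hh

theorem ExpTypeLE.integrable_windowDensity (hf : ExpTypeLE a f) (ha : 0 < a)
    (hd : Differentiable ℂ f) (hi : Integrable fun x : ℝ => f x) :
    Integrable (windowDensity a f) :=
  (hi.norm.const_mul _).add (hf.integrable_deriv ha hd hi).norm

theorem ExpTypeLE.integral_windowDensity_le (hf : ExpTypeLE a f) (ha : 0 < a)
    (hd : Differentiable ℂ f) (hi : Integrable fun x : ℝ => f x) :
    ∫ s, windowDensity a f s ≤ a * (π⁻¹ + Real.exp 1) * ∫ x : ℝ, ‖f x‖ := by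
  calc ∫ s, windowDensity a f s
      = a / π * (∫ x : ℝ, ‖f x‖) + ∫ x : ℝ, ‖deriv f x‖ := by
        rw [← integral_const_mul]
        exact integral_add (hi.norm.const_mul _) (hf.integrable_deriv ha hd hi).norm
    _ ≤ a / π * (∫ x : ℝ, ‖f x‖) + Real.exp 1 * a * ∫ x : ℝ, ‖f x‖ := by
        gcongr
        exact hf.integral_norm_deriv_le ha hd hi
    _ = a * (π⁻¹ + Real.exp 1) * ∫ x : ℝ, ‖f x‖ := by ring

theorem paley_wiener_majorant_general :
    ∃ C : ℝ, 0 < C ∧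
      ∀ a : ℝ, 0 < a → ∀ f : ℂ → ℂ, Differentiable ℂ f → ExpTypeLE a f →
        Integrable (fun x : ℝ => f x) →
        ∃ g : ℂ → ℂ, Differentiable ℂ g ∧ ExpTypeLE a g ∧
          Integrable (fun x : ℝ => g x) ∧
          (∀ x : ℝ, (g x).im = 0 ∧ ‖f x‖ ≤ (g x).re) ∧
          ∫ x : ℝ, ‖g x‖ ≤ C * ∫ x : ℝ, ‖f x‖ := by
  have hsinc := integral_sq_sinc_pos
  refine ⟨(π⁻¹ + Real.exp 1) * (π ^ 2 / 2 * ∫ x, Real.sinc x ^ 2), by positivity,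
    fun a ha f hd hf hi => ?_⟩
  have hw := hf.integrable_windowDensity ha hd hi
  have hw0 := windowDensity_nonneg ha.le f
  refine ⟨fejerConvolution a (windowDensity a f), differentiable_fejerConvolution ha.le hw,
    expTypeLE_fejerConvolution ha.le hw, integrable_fejerConvolution ha.ne' hw, fun x => ⟨?_, ?_⟩,
    ?_⟩
  · rw [fejerConvolution_ofReal, ofReal_im]
  · exact (norm_le_setIntegral_windowDensity ha hd x).trans
      (setIntegral_le_re_fejerConvolution ha hw hw0 x)
  · rw [integral_norm_fejerConvolution ha hw hw0]
    calc (∫ s, windowDensity a f s) * (π ^ 2 / (2 * a) * ∫ x, Real.sinc x ^ 2)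
        ≤ a * (π⁻¹ + Real.exp 1) * (∫ x : ℝ, ‖f x‖) *
            (π ^ 2 / (2 * a) * ∫ x, Real.sinc x ^ 2) := by
          gcongr
          exact hf.integral_windowDensity_le ha hd hi
      _ = (π⁻¹ + Real.exp 1) * (π ^ 2 / 2 * ∫ x, Real.sinc x ^ 2) * ∫ x : ℝ, ‖f x‖ := by
          field_simp

end Majorant

/-- **Theorem (majorant in the Paley–Wiener space `PW¹_π`).** There is an absolute
constant `C` such that every entire function `f` of exponential type at most `π`,
real-valued on `ℝ` and integrable on `ℝ`, admits an entire majorant `g` of exponential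
type at most `π`, integrable on `ℝ`, with `|f(t)| ≤ g(t)` for all `t ∈ ℝ` (in particular
`g` is real-valued on `ℝ`) and `‖g‖_{L¹(ℝ)} ≤ C ‖f‖_{L¹(ℝ)}`. -/
theorem paley_wiener_majorant :
    ∃ C : ℝ, 0 < C ∧
      ∀ f : ℂ → ℂ, Differentiable ℂ f → ExpTypeLE Real.pi f →
        (∀ x : ℝ, ((f : ℂ → ℂ) x).im = 0) →
        Integrable (fun x : ℝ => f x) →
        ∃ g : ℂ → ℂ, Differentiable ℂ g ∧ ExpTypeLE Real.pi g ∧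
          Integrable (fun x : ℝ => g x) ∧
          (∀ x : ℝ, (g x).im = 0 ∧ ‖f x‖ ≤ (g x).re) ∧
          ∫ x : ℝ, ‖g x‖ ≤ C * ∫ x : ℝ, ‖f x‖ := by
  obtain ⟨C, hC, hmajorant⟩ := paley_wiener_majorant_general
  exact ⟨C, hC, fun f hd hf _ hi => hmajorant π Real.pi_pos f hd hf hi⟩
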